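/- Let X be a complex Banach space, T a bounded linear operator on X, and (M,N) ∈ Red(T) such that T_M is invertible, T_N is zeroloid, and σ(T_M) ∩ σ(T_N) = ∅. Then σ(T_N) \ {0} consists of isolated points of σ(T), and for every bounded operator S commuting with T, both M and N are S-invariant. -/

import Mathlib

open Filter Set Function

variable {X : Type*} [NormedAddCommGroup X] [NormedSpace ℂ X] [CompleteSpace X]

/-- Accumulation points of a subset of `ℂ`. -/
def accSet (A : Set ℂ) : Set ℂ := {z : ℂ | AccPt z (Filter.principal A)}

/-- `(M, N) ∈ Red(T)`: a pair of closed `T`-invariant subspaces with `X = M ⊕ N`. -/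
def Red (T : X →L[ℂ] X) (M N : Submodule ℂ X) : Prop :=
  IsClosed (M : Set X) ∧ IsClosed (N : Set X) ∧ (∀ x ∈ M, T x ∈ M) ∧ (∀ x ∈ N, T x ∈ N) ∧
    IsCompl M N

open Classical in
/-- Restriction of `T` to a `T`-invariant subspace `M` (junk value `0` if `M` is not invariant). -/
noncomputable def restrictCLM (T : X →L[ℂ] X) (M : Submodule ℂ X) : M →L[ℂ] M :=
  if h : ∀ x ∈ M, T x ∈ M then
    { toLinearMap := (T : X →ₗ[ℂ] X).restrict h
      cont := by exact (T.continuous.comp continuous_subtype_val).subtype_mk _ }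
  else 0

/-- An operator is zeroloid if the accumulation points of its spectrum are contained in `{0}`. -/
def Zeroloid {Y : Type*} [NormedAddCommGroup Y] [NormedSpace ℂ Y] (S : Y →L[ℂ] Y) : Prop :=
  accSet (spectrum ℂ S) ⊆ {0}

/-!
The isomorphism `M × N ≃ X` conjugates `(T_M, T_N)` to `T`, so `σ(T) = σ(T_M) ∪ σ(T_N)`. Since
`σ(T_M)` is closed and misses `σ(T_N)`, a point of `σ(T_N)` can only be an accumulation point of
`σ(T)` by being one of `σ(T_N)`. If `S` commutes with `T`, then its corner `A : M → N` satisfies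
`A T_M = T_N A`, and Rosenblum's theorem gives `A = 0`: the functions `(z - T_N)⁻¹ A` and
`A (z - T_M)⁻¹` agree wherever both are defined, and as the spectra are disjoint they glue to an
entire function vanishing at infinity, which is zero by Liouville's theorem.
-/

section Rosenblum

variable {𝕜 E F : Type*} [NontriviallyNormedField 𝕜] [NormedAddCommGroup E] [NormedSpace 𝕜 E]
  [NormedAddCommGroup F] [NormedSpace 𝕜 F] {A : E →L[𝕜] F} {B : E →L[𝕜] E} {D : F →L[𝕜] F} {z : 𝕜}

theorem comp_algebraMap_sub_eq_algebraMap_sub_comp (h : A ∘L B = D ∘L A) (z : 𝕜) :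
    A ∘L (algebraMap 𝕜 (E →L[𝕜] E) z - B) = (algebraMap 𝕜 (F →L[𝕜] F) z - D) ∘L A := by
  rw [ContinuousLinearMap.comp_sub, ContinuousLinearMap.sub_comp, h]
  ext x
  simp [Algebra.algebraMap_eq_smul_one]

theorem resolvent_comp_eq_comp_resolvent (h : A ∘L B = D ∘L A) (hB : z ∈ resolventSet 𝕜 B)
    (hD : z ∈ resolventSet 𝕜 D) : resolvent D z ∘L A = A ∘L resolvent B z := by
  have hBinv : (algebraMap 𝕜 (E →L[𝕜] E) z - B) ∘L resolvent B z = .id 𝕜 E :=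
    Ring.mul_inverse_cancel _ hB
  have hDinv : resolvent D z ∘L (algebraMap 𝕜 (F →L[𝕜] F) z - D) = .id 𝕜 F :=
    Ring.inverse_mul_cancel _ hD
  calc resolvent D z ∘L A
      = resolvent D z ∘L (A ∘L (algebraMap 𝕜 (E →L[𝕜] E) z - B)) ∘L resolvent B z := by
        rw [ContinuousLinearMap.comp_assoc, hBinv, ContinuousLinearMap.comp_id]
    _ = (resolvent D z ∘L (algebraMap 𝕜 (F →L[𝕜] F) z - D)) ∘L A ∘L resolvent B z := by
        rw [comp_algebraMap_sub_eq_algebraMap_sub_comp h]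
        simp only [ContinuousLinearMap.comp_assoc]
    _ = A ∘L resolvent B z := by rw [hDinv, ContinuousLinearMap.id_comp]

open Classical in
/-- The common extension of `z ↦ (z - D)⁻¹ A` and `z ↦ A (z - B)⁻¹` to `ρ(D) ∪ ρ(B)`, for an `A`
with `A B = D A`; it is entire when `σ(B)` and `σ(D)` are disjoint. The first formula is used on all
of `ρ(D)`; outside `ρ(D) ∪ ρ(B)` the value is `0`, the junk value of the resolvent. -/
noncomputable def gluedResolvent (A : E →L[𝕜] F) (B : E →L[𝕜] E) (D : F →L[𝕜] F) (z : 𝕜) :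
    E →L[𝕜] F :=
  if z ∈ resolventSet 𝕜 D then resolvent D z ∘L A else A ∘L resolvent B z

theorem gluedResolvent_of_mem_resolventSet_right (hD : z ∈ resolventSet 𝕜 D) :
    gluedResolvent A B D z = resolvent D z ∘L A :=
  if_pos hD

theorem gluedResolvent_of_mem_resolventSet_left (h : A ∘L B = D ∘L A)
    (hB : z ∈ resolventSet 𝕜 B) : gluedResolvent A B D z = A ∘L resolvent B z := by
  by_cases hD : z ∈ resolventSet 𝕜 D
  · rw [gluedResolvent_of_mem_resolventSet_right hD, resolvent_comp_eq_comp_resolvent h hB hD]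
  · exact if_neg hD

theorem differentiableAt_gluedResolvent_right [CompleteSpace F] (hD : z ∈ resolventSet 𝕜 D) :
    DifferentiableAt 𝕜 (gluedResolvent A B D) z := by
  have hdiff : DifferentiableAt 𝕜 (fun w ↦ resolvent D w ∘L A) z :=
    (spectrum.hasDerivAt_resolvent_const_left hD).differentiableAt.clm_comp
      (differentiableAt_const A)
  refine hdiff.congr_of_eventuallyEq ?_
  filter_upwards [(spectrum.isOpen_resolventSet D).mem_nhds hD] with w hw
  exact gluedResolvent_of_mem_resolventSet_right hw

theorem differentiableAt_gluedResolvent_left [CompleteSpace E] (h : A ∘L B = D ∘L A)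
    (hB : z ∈ resolventSet 𝕜 B) : DifferentiableAt 𝕜 (gluedResolvent A B D) z := by
  have hdiff : DifferentiableAt 𝕜 (fun w ↦ A ∘L resolvent B w) z :=
    (differentiableAt_const A).clm_comp
      (spectrum.hasDerivAt_resolvent_const_left hB).differentiableAt
  refine hdiff.congr_of_eventuallyEq ?_
  filter_upwards [(spectrum.isOpen_resolventSet B).mem_nhds hB] with w hw
  exact gluedResolvent_of_mem_resolventSet_left h hw

theorem differentiable_gluedResolvent [CompleteSpace E] [CompleteSpace F] (h : A ∘L B = D ∘L A)
    (hdisj : Disjoint (spectrum 𝕜 B) (spectrum 𝕜 D)) :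
    Differentiable 𝕜 (gluedResolvent A B D) := fun z ↦ by
  by_cases hD : z ∈ resolventSet 𝕜 D
  · exact differentiableAt_gluedResolvent_right hD
  · exact differentiableAt_gluedResolvent_left h
      (spectrum.notMem_iff.mp (hdisj.notMem_of_mem_right hD))

theorem eventually_mem_resolventSet_cobounded {R : Type*} [NormedRing R] [NormedAlgebra 𝕜 R]
    [CompleteSpace R] (a : R) : ∀ᶠ z in Bornology.cobounded 𝕜, z ∈ resolventSet 𝕜 a := by
  filter_upwards [Bornology.isBounded_def.mp (spectrum.isBounded (𝕜 := 𝕜) a)] with z hz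
  exact spectrum.notMem_iff.mp hz

theorem tendsto_gluedResolvent_cobounded [CompleteSpace F] (A : E →L[𝕜] F)
    (B : E →L[𝕜] E) (D : F →L[𝕜] F) :
    Tendsto (gluedResolvent A B D) (Bornology.cobounded 𝕜) (nhds 0) := by
  have hcomp : Tendsto (fun z : 𝕜 ↦ resolvent D z ∘L A) (Bornology.cobounded 𝕜) (nhds 0) := by
    simpa [comp_def] using (((ContinuousLinearMap.compL 𝕜 E F F).flip A).continuous.tendsto 0).comp
      (spectrum.resolvent_tendsto_cobounded D)
  refine hcomp.congr' ?_
  filter_upwards [eventually_mem_resolventSet_cobounded D] with z hz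
  exact (gluedResolvent_of_mem_resolventSet_right hz).symm

end Rosenblum

theorem eq_zero_of_comp_eq_comp_of_disjoint_spectrum {E F : Type*} [NormedAddCommGroup E]
    [NormedSpace ℂ E] [CompleteSpace E] [NormedAddCommGroup F] [NormedSpace ℂ F] [CompleteSpace F]
    {A : E →L[ℂ] F} {B : E →L[ℂ] E} {D : F →L[ℂ] F} (h : A ∘L B = D ∘L A)
    (hdisj : Disjoint (spectrum ℂ B) (spectrum ℂ D)) : A = 0 := by
  obtain ⟨z, hz⟩ := (eventually_mem_resolventSet_cobounded (𝕜 := ℂ) D).exists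
  have hglued : gluedResolvent A B D z = 0 :=
    (differentiable_gluedResolvent h hdisj).apply_eq_of_tendsto_cocompact z
      (Metric.cobounded_eq_cocompact (α := ℂ) ▸ tendsto_gluedResolvent_cobounded A B D)
  have hinv : (algebraMap ℂ (F →L[ℂ] F) z - D) ∘L resolvent D z = .id ℂ F :=
    Ring.mul_inverse_cancel _ hz
  calc A = (algebraMap ℂ (F →L[ℂ] F) z - D) ∘L resolvent D z ∘L A := by
        rw [← ContinuousLinearMap.comp_assoc, hinv, ContinuousLinearMap.id_comp]
    _ = 0 := by
        rw [← gluedResolvent_of_mem_resolventSet_right hz, hglued, ContinuousLinearMap.comp_zero]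

theorem accSet_union_subset {A B : Set ℂ} (hA : IsClosed A) : accSet (A ∪ B) ⊆ A ∪ accSet B :=
  (derivedSet_union A B).subset.trans
    (union_subset_union_left _ ((isClosed_iff_derivedSet_subset A).mp hA))

section Algebraic

variable {Y : Type*} [NormedAddCommGroup Y] [NormedSpace ℂ Y] {T : Y →L[ℂ] Y} {M N : Submodule ℂ Y}

theorem coe_restrictCLM_apply (h : ∀ x ∈ M, T x ∈ M) (x : M) : (restrictCLM T M x : Y) = T x := by
  simp only [restrictCLM, dif_pos h]
  rfl

namespace Red

theorem symm (h : Red T M N) : Red T N M :=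
  ⟨h.2.1, h.1, h.2.2.2.1, h.2.2.1, h.2.2.2.2.symm⟩

theorem map_mem_left (h : Red T M N) : ∀ x ∈ M, T x ∈ M := h.2.2.1

theorem isCompl (h : Red T M N) : IsCompl M N := h.2.2.2.2

theorem algebraMap_sub (h : Red T M N) (z : ℂ) :
    Red (algebraMap ℂ (Y →L[ℂ] Y) z - T) M N := by
  have hsub {L : Submodule ℂ Y} (hL : ∀ x ∈ L, T x ∈ L) :
      ∀ x ∈ L, (algebraMap ℂ (Y →L[ℂ] Y) z - T) x ∈ L := fun x hx ↦ by
    simpa [Algebra.algebraMap_eq_smul_one] using L.sub_mem (L.smul_mem z hx) (hL x hx)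
  exact ⟨h.1, h.2.1, hsub h.map_mem_left, hsub h.symm.map_mem_left, h.isCompl⟩

theorem restrictCLM_algebraMap_sub (h : Red T M N) (z : ℂ) :
    restrictCLM (algebraMap ℂ (Y →L[ℂ] Y) z - T) M =
      algebraMap ℂ (M →L[ℂ] M) z - restrictCLM T M := by
  ext x
  rw [coe_restrictCLM_apply (h.algebraMap_sub z).map_mem_left]
  simp [coe_restrictCLM_apply h.map_mem_left, Algebra.algebraMap_eq_smul_one]

theorem semiconj_prodEquivOfIsCompl (h : Red T M N) :
    Semiconj (M.prodEquivOfIsCompl N h.isCompl) (Prod.map (restrictCLM T M) (restrictCLM T N)) T :=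
  fun x ↦ by
    simp [coe_restrictCLM_apply h.map_mem_left, coe_restrictCLM_apply h.symm.map_mem_left]

theorem bijective_iff (h : Red T M N) :
    Bijective T ↔ Bijective (restrictCLM T M) ∧ Bijective (restrictCLM T N) := by
  let e := M.prodEquivOfIsCompl N h.isCompl
  rw [← Prod.map_bijective, ← e.bijective.of_comp_iff, ← e.bijective.of_comp_iff' (Prod.map _ _),
    h.semiconj_prodEquivOfIsCompl.comp_eq]

end Red

end Algebraic

section Banach

variable {T : X →L[ℂ] X} {M N : Submodule ℂ X}

namespace Red

theorem completeSpace_left (h : Red T M N) : CompleteSpace M := h.1.completeSpace_coe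

theorem isTopCompl (h : Red T M N) : Submodule.IsTopCompl M N :=
  Submodule.isTopCompl_iff_isCompl_isClosed.mpr ⟨h.isCompl, h.1, h.2.1⟩

theorem spectrum_eq_union (h : Red T M N) :
    spectrum ℂ T = spectrum ℂ (restrictCLM T M) ∪ spectrum ℂ (restrictCLM T N) := by
  have := h.completeSpace_left
  have := h.symm.completeSpace_left
  ext z
  rw [mem_union, spectrum.mem_iff, spectrum.mem_iff, spectrum.mem_iff, ← not_and_or, not_iff_not,
    ← h.restrictCLM_algebraMap_sub, ← h.symm.restrictCLM_algebraMap_sub]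
  simp only [ContinuousLinearMap.isUnit_iff_bijective]
  exact (h.algebraMap_sub z).bijective_iff

theorem spectrum_sdiff_accSet_subset (h : Red T M N)
    (hdisj : Disjoint (spectrum ℂ (restrictCLM T M)) (spectrum ℂ (restrictCLM T N))) :
    spectrum ℂ (restrictCLM T N) \ accSet (spectrum ℂ (restrictCLM T N)) ⊆
      spectrum ℂ T \ accSet (spectrum ℂ T) := by
  have := h.completeSpace_left
  rw [h.spectrum_eq_union]
  rintro z ⟨hz, hz_acc⟩
  refine ⟨subset_union_right hz, fun hacc ↦ ?_⟩
  rcases accSet_union_subset (spectrum.isClosed (restrictCLM T M)) hacc with hzM | hzN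
  · exact hdisj.notMem_of_mem_right hz hzM
  · exact hz_acc hzN

theorem projectionOntoL_comp (h : Red T M N) :
    M.projectionOntoL N h.isTopCompl ∘L T =
      restrictCLM T M ∘L M.projectionOntoL N h.isTopCompl := by
  ext x
  obtain ⟨⟨m, n⟩, rfl⟩ := (M.prodEquivOfIsCompl N h.isCompl).surjective x
  rw [ContinuousLinearMap.comp_apply, ← h.semiconj_prodEquivOfIsCompl]
  simp

theorem corner_comp_restrictCLM (h : Red T M N) {S : X →L[ℂ] X} (hS : Commute S T) :
    (N.projectionOntoL M h.symm.isTopCompl ∘L S ∘L M.subtypeL) ∘L restrictCLM T M =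
      restrictCLM T N ∘L N.projectionOntoL M h.symm.isTopCompl ∘L S ∘L M.subtypeL := by
  have hsubtype : M.subtypeL ∘L restrictCLM T M = T ∘L M.subtypeL :=
    ContinuousLinearMap.ext (coe_restrictCLM_apply h.map_mem_left)
  have hST : S ∘L T = T ∘L S := hS
  let P := N.projectionOntoL M h.symm.isTopCompl
  calc (P ∘L S ∘L M.subtypeL) ∘L restrictCLM T M
      = P ∘L S ∘L M.subtypeL ∘L restrictCLM T M := rfl
    _ = P ∘L (S ∘L T) ∘L M.subtypeL := by rw [hsubtype]; rfl
    _ = (P ∘L T) ∘L S ∘L M.subtypeL := by rw [hST]; rfl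
    _ = restrictCLM T N ∘L P ∘L S ∘L M.subtypeL := by rw [h.symm.projectionOntoL_comp]; rfl

theorem map_mem_left_of_commute (h : Red T M N)
    (hdisj : Disjoint (spectrum ℂ (restrictCLM T M)) (spectrum ℂ (restrictCLM T N)))
    {S : X →L[ℂ] X} (hS : Commute S T) : ∀ x ∈ M, S x ∈ M := by
  have := h.completeSpace_left
  have := h.symm.completeSpace_left
  intro x hx
  have hcorner : N.projectionOntoL M h.symm.isTopCompl ∘L S ∘L M.subtypeL = 0 :=
    eq_zero_of_comp_eq_comp_of_disjoint_spectrum (h.corner_comp_restrictCLM hS) hdisj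
  exact (Submodule.projectionOntoL_apply_eq_zero_iff h.symm.isTopCompl).mp
    (DFunLike.congr_fun hcorner ⟨x, hx⟩)

end Red

end Banach

theorem isolated_and_hyperinvariant_general (T : X →L[ℂ] X) (M N : Submodule ℂ X)
    (hRed : Red T M N)
    (hdisj : spectrum ℂ (restrictCLM T M) ∩ spectrum ℂ (restrictCLM T N) = ∅) :
    spectrum ℂ (restrictCLM T N) \ accSet (spectrum ℂ (restrictCLM T N)) ⊆
        spectrum ℂ T \ accSet (spectrum ℂ T) ∧
      ∀ S : X →L[ℂ] X, S * T = T * S → (∀ x ∈ M, S x ∈ M) ∧ (∀ x ∈ N, S x ∈ N) := by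
  rw [← disjoint_iff_inter_eq_empty] at hdisj
  exact ⟨hRed.spectrum_sdiff_accSet_subset hdisj, fun S hS ↦
    ⟨hRed.map_mem_left_of_commute hdisj hS, hRed.symm.map_mem_left_of_commute hdisj.symm hS⟩⟩

/-- If `(M,N) ∈ Red(T)` with `T_M` invertible, `T_N` zeroloid and
`σ(T_M) ∩ σ(T_N) = ∅`, then `σ(T_N) \ {0}` consists of isolated points of `σ(T)` and
both `M` and `N` are invariant under every operator commuting with `T`. -/
theorem isolated_and_hyperinvariant (T : X →L[ℂ] X) (M N : Submodule ℂ X)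
    (hRed : Red T M N) (hM : Function.Bijective (restrictCLM T M))
    (hN : Zeroloid (restrictCLM T N))
    (hdisj : spectrum ℂ (restrictCLM T M) ∩ spectrum ℂ (restrictCLM T N) = ∅) :
    spectrum ℂ (restrictCLM T N) \ {0} ⊆ spectrum ℂ T \ accSet (spectrum ℂ T) ∧
      ∀ S : X →L[ℂ] X, S * T = T * S → (∀ x ∈ M, S x ∈ M) ∧ (∀ x ∈ N, S x ∈ N) := by
  have ⟨hiso, hinv⟩ := isolated_and_hyperinvariant_general T M N hRed hdisj
  exact ⟨(sdiff_subset_sdiff_right hN).trans hiso, hinv⟩
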